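/- Let G be a finite weighted directed multigraph with vertex set {1,...,n}, edge signs σ_e ∈ {+1,-1}, and edge connections φ_e taken in a commutative ring R (e.g. a Laurent polynomial ring), such that every edge e from i to j has a reverse edge from j to i with the same sign and inverse connection. Define the adjacency matrix A = (a_{ij}) by a_{ij} = Σ σ_e φ_e over edges from i to j for i ≠ j and a_{ii} = 0, the diagonal matrix δ with δ_{ii} = Σ_j a_{ij}, and the Laplacian L = A − δ. Then for any non-loop edge e, det(L_G) = det(L_{G∖e}) + σ_e · det(L_{G/e}), where G∖e is G with e (and its reverse) deleted and G/e is G with e contracted. -/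

import Mathlib

/-- A finite signed graph with edge "connections" (holonomies) valued in the
units of a commutative ring `R`.  Each undirected edge is recorded once, with a
chosen direction from `src` to `tgt`; the symmetrized (directed) graph has, for
each such edge, a reverse edge with the same sign and inverse connection, and
this symmetrization is built into the definition of the adjacency matrix. -/
structure CGraph (R : Type) [CommRing R] where
  V : Type
  E : Type
  [fV : Fintype V]
  [dV : DecidableEq V]
  [fE : Fintype E]
  [dE : DecidableEq E]
  src : E → V
  tgt : E → V
  sign : E → R
  conn : E → Rˣ

attribute [instance] CGraph.fV CGraph.dV CGraph.fE CGraph.dE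

namespace CGraph

variable {R : Type} [CommRing R]

/-- The adjacency matrix: the `(i,j)` entry is the sum of `σ_e φ_e` over
directed edges from `i` to `j` (each undirected edge contributing its two
directions with inverse connections). -/
def adj (G : CGraph R) : Matrix G.V G.V R := fun i j =>
  ∑ e : G.E,
    ((if G.src e = i ∧ G.tgt e = j then G.sign e * (G.conn e : R) else 0)
      + (if G.src e = j ∧ G.tgt e = i then G.sign e * ((G.conn e)⁻¹ : Rˣ) else 0))

/-- The signed degree of a vertex (loops counted twice). -/
def deg (G : CGraph R) : G.V → R := fun i =>
  ∑ e : G.E, G.sign e *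
    ((if G.src e = i then 1 else 0) + (if G.tgt e = i then 1 else 0))

/-- The Laplacian matrix of `G`, normalized (as in Forman's formula) so that its
determinant is the Laplacian polynomial. -/
def lap (G : CGraph R) : Matrix G.V G.V R := Matrix.diagonal G.deg - G.adj

/-- The Laplacian determinant of `G`. -/
def lapDet (G : CGraph R) : R := G.lap.det

/-- Deletion of the (undirected) edge `e0` (i.e. of both of its directions). -/
def deleteEdge (G : CGraph R) (e0 : G.E) : CGraph R where
  V := G.V
  E := {e : G.E // e ≠ e0}
  src e := G.src e.1
  tgt e := G.tgt e.1
  sign e := G.sign e.1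
  conn e := G.conn e.1

/-- Contraction of a non-loop edge `e0`: its endpoints are identified (the
vertex `tgt e0` is absorbed into `src e0`), the edge `e0` (with its reverse) is
removed, and connections of the remaining edges are modified by the gauge
change concentrated at the absorbed vertex, so that connections of paths are
preserved. -/
def contract (G : CGraph R) (e0 : G.E) (h : G.src e0 ≠ G.tgt e0) : CGraph R where
  V := {u : G.V // u ≠ G.tgt e0}
  E := {e : G.E // e ≠ e0}
  src e := if h' : G.src e.1 = G.tgt e0 then ⟨G.src e0, h⟩ else ⟨G.src e.1, h'⟩
  tgt e := if h' : G.tgt e.1 = G.tgt e0 then ⟨G.src e0, h⟩ else ⟨G.tgt e.1, h'⟩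
  sign e := G.sign e.1
  conn e :=
    (if G.src e.1 = G.tgt e0 then G.conn e0 else 1) * G.conn e.1 *
      (if G.tgt e.1 = G.tgt e0 then (G.conn e0)⁻¹ else 1)

end CGraph

namespace Matrix

variable {n R : Type*} [Fintype n] [DecidableEq n] [CommRing R]

theorem det_add_single_self (N : Matrix n n R) (t : n) (c : R) :
    (N + single t t c).det = N.det + c * (N.submatrix ((↑) : {u // u ≠ t} → n) (↑)).det := by
  have hrow : N + single t t c = N.updateRow t (N t + c • Pi.single t 1) := by
    ext i j
    rcases eq_or_ne i t with rfl | hi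
    · simp [single_apply, Pi.single_apply, eq_comm]
    · simp [hi, hi.symm]
  have hminor : (N.updateRow t (Pi.single t 1)).det =
      (N.submatrix ((↑) : {u // u ≠ t} → n) (↑)).det := by
    rw [twoBlockTriangular_det _ (fun i => i ≠ t)]
    · have htop : toSquareBlockProp (N.updateRow t (Pi.single t 1)) (fun i => i ≠ t) =
          N.submatrix ((↑) : {u // u ≠ t} → n) (↑) := by
        ext i j
        simp [toSquareBlockProp_def, updateRow_ne i.2]
      have hbot : toSquareBlockProp (N.updateRow t (Pi.single t 1)) (fun i => ¬ i ≠ t) = 1 := by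
        ext ⟨i, hi⟩ ⟨j, hj⟩
        obtain rfl := not_not.mp hi
        obtain rfl := not_not.mp hj
        simp [toSquareBlockProp_def]
      rw [htop, hbot, det_one, mul_one]
    · intro i hi j hj
      obtain rfl := not_not.mp hi
      simp [hj]
  rw [hrow, det_updateRow_add, updateRow_eq_self, det_updateRow_smul, hminor]

theorem transvection_mul_mul_transvection_apply (N : Matrix n n R) (s t i j : n) (a b : R) :
    (transvection s t a * N * transvection t s b) i j =
      N i j + (if i = s then a * N t j else 0) + (if j = s then N i t * b else 0) +
        (if i = s ∧ j = s then a * N t t * b else 0) := by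
  by_cases hi : i = s <;> by_cases hj : j = s <;> simp [hi, hj] <;> ring

end Matrix

namespace CGraph

variable {R : Type} [CommRing R]

/-- The contribution to the Laplacian of a positive edge from `a` to `b` with connection `c`,
written as a product of a column and a row. -/
def edgeLap {V : Type} [DecidableEq V] (a b : V) (c : Rˣ) : Matrix V V R := fun i j =>
  ((if a = i then 1 else 0) - (if b = i then ((c⁻¹ : Rˣ) : R) else 0)) *
    ((if a = j then 1 else 0) - (if b = j then (c : R) else 0))

theorem edgeLap_apply {V : Type} [DecidableEq V] (a b : V) (c : Rˣ) (i j : V) :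
    edgeLap a b c i j =
      (if i = j then (if a = i then 1 else 0) + (if b = i then 1 else 0) else 0) -
        ((if a = i ∧ b = j then (c : R) else 0) +
          (if a = j ∧ b = i then ((c⁻¹ : Rˣ) : R) else 0)) := by
  have hc := c.inv_mul
  unfold edgeLap
  generalize ((c⁻¹ : Rˣ) : R) = x at *
  generalize (c : R) = y at *
  by_cases hij : i = j
  · subst hij
    by_cases ha : a = i <;> by_cases hb : b = i <;> simp [ha, hb] <;> linear_combination hc
  · by_cases ha : a = i <;> by_cases hb : b = i <;> by_cases ha' : a = j <;>
      by_cases hb' : b = j <;> simp_all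

theorem lap_apply (G : CGraph R) (i j : G.V) :
    G.lap i j = ∑ e, G.sign e * edgeLap (G.src e) (G.tgt e) (G.conn e) i j := by
  have hdiag : Matrix.diagonal G.deg i j = ∑ e, G.sign e *
      (if i = j then (if G.src e = i then 1 else 0) + (if G.tgt e = i then 1 else 0) else 0) := by
    rcases eq_or_ne i j with rfl | hij
    · simp [deg]
    · simp [hij]
  rw [lap, Matrix.sub_apply, hdiag, adj, ← Finset.sum_sub_distrib]
  refine Finset.sum_congr rfl fun e _ => ?_
  simp only [edgeLap_apply, mul_sub, mul_add, mul_ite, mul_zero]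

/-- The Laplacian of `G.deleteEdge e0`, indexed by the vertices of `G`. -/
def deletedLap (G : CGraph R) (e0 : G.E) : Matrix G.V G.V R := (G.deleteEdge e0).lap

theorem deletedLap_apply (G : CGraph R) (e0 : G.E) (i j : G.V) :
    G.deletedLap e0 i j = ∑ e : {e : G.E // e ≠ e0},
      G.sign e * edgeLap (G.src e) (G.tgt e) (G.conn e) i j :=
  (G.deleteEdge e0).lap_apply i j

theorem lap_eq_deletedLap_add (G : CGraph R) (e0 : G.E) :
    G.lap = G.deletedLap e0 + G.sign e0 • edgeLap (G.src e0) (G.tgt e0) (G.conn e0) := by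
  ext i j
  rw [Matrix.add_apply, Matrix.smul_apply, lap_apply, deletedLap_apply, smul_eq_mul,
    ← Finset.sum_erase_add _ _ (Finset.mem_univ e0)]
  congr 1
  exact Finset.sum_subtype _ (by simp) _

/-- The transvections realizing the gauge change of a contraction turn the contracted edge into
a single diagonal entry. -/
theorem transvection_mul_edgeLap_mul_transvection {V : Type} [Fintype V] [DecidableEq V]
    {s t : V} (h : s ≠ t) (c : Rˣ) :
    Matrix.transvection s t (c : R) * edgeLap s t c *
      Matrix.transvection t s ((c⁻¹ : Rˣ) : R) = Matrix.single t t 1 := by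
  ext i j
  have hc := c.inv_mul
  rw [Matrix.transvection_mul_mul_transvection_apply]
  simp only [edgeLap, Matrix.single_apply]
  generalize ((c⁻¹ : Rˣ) : R) = x at *
  generalize (c : R) = y at *
  grind

theorem edgeLap_contract {V : Type} [DecidableEq V] {s t : V} (c0 : Rˣ)
    (a b : V) (c : Rˣ) {i j : V} (hi : i ≠ t) (hj : j ≠ t) :
    edgeLap (if a = t then s else a) (if b = t then s else b)
        ((if a = t then c0 else 1) * c * (if b = t then c0⁻¹ else 1)) i j =
      edgeLap a b c i j + (if i = s then (c0 : R) * edgeLap a b c t j else 0) +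
        (if j = s then edgeLap a b c i t * ((c0⁻¹ : Rˣ) : R) else 0) +
        (if i = s ∧ j = s then (c0 : R) * edgeLap a b c t t * ((c0⁻¹ : Rˣ) : R) else 0) := by
  have hc0 := c0.inv_mul
  have hc := c.inv_mul
  unfold edgeLap
  by_cases ha : a = t <;> by_cases hb : b = t <;>
    simp only [ha, hb, hi.symm, hj.symm, if_true, if_false, one_mul, mul_one, mul_inv, inv_inv,
      Units.val_mul, @eq_comm _ s]
  all_goals
    generalize ((c⁻¹ : Rˣ) : R) = x at *
    generalize (c : R) = y at *
    generalize ((c0⁻¹ : Rˣ) : R) = x0 at *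
    generalize (c0 : R) = y0 at *
    by_cases his : i = s <;> by_cases hjs : j = s <;> simp [his, hjs] <;> grind

theorem lap_contract (G : CGraph R) (e0 : G.E) (h : G.src e0 ≠ G.tgt e0) :
    (G.contract e0 h).lap =
      (Matrix.transvection (G.src e0) (G.tgt e0) (G.conn e0 : R) * G.deletedLap e0 *
        Matrix.transvection (G.tgt e0) (G.src e0) (((G.conn e0)⁻¹ : Rˣ) : R)).submatrix
          (Subtype.val : {u // u ≠ G.tgt e0} → G.V)
          (Subtype.val : {u // u ≠ G.tgt e0} → G.V) := by
  ext ⟨i, hi⟩ ⟨j, hj⟩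
  rw [Matrix.submatrix_apply, Matrix.transvection_mul_mul_transvection_apply]
  simp only [deletedLap_apply, Finset.mul_sum, Finset.sum_mul, ← Finset.sum_add_distrib,
    Finset.ite_sum_zero]
  refine ((G.contract e0 h).lap_apply _ _).trans
    (Finset.sum_congr rfl fun (e : {e : G.E // e ≠ e0}) _ => ?_)
  have hsrc (k : {u // u ≠ G.tgt e0}) : (G.contract e0 h).src e = k ↔
      (if G.src e.1 = G.tgt e0 then G.src e0 else G.src e.1) = k := by
    simp only [contract, Subtype.ext_iff]
    split_ifs <;> rfl
  have htgt (k : {u // u ≠ G.tgt e0}) : (G.contract e0 h).tgt e = k ↔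
      (if G.tgt e.1 = G.tgt e0 then G.src e0 else G.tgt e.1) = k := by
    simp only [contract, Subtype.ext_iff]
    split_ifs <;> rfl
  have hedge : edgeLap ((G.contract e0 h).src e) ((G.contract e0 h).tgt e)
      ((G.contract e0 h).conn e) ⟨i, hi⟩ ⟨j, hj⟩ = _ :=
    Eq.trans (by simp only [edgeLap, hsrc, htgt]; rfl)
      (edgeLap_contract (G.conn e0) (G.src e.1) (G.tgt e.1) (G.conn e.1) hi hj)
  rw [hedge]
  change G.sign e.1 * _ = _
  split_ifs <;> ring

end CGraph

/-- Skein relation for the Laplacian determinant: for a non-loop edge `e`,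
`det L_G = det L_{G∖e} + σ_e · det L_{G/e}`. -/
theorem lapDet_skein {R : Type} [CommRing R] (G : CGraph R)
    (hsign : ∀ e, G.sign e = 1 ∨ G.sign e = -1)
    (e0 : G.E) (h : G.src e0 ≠ G.tgt e0) :
    G.lapDet = (G.deleteEdge e0).lapDet + G.sign e0 * (G.contract e0 h).lapDet := by
  have hdet (N : Matrix G.V G.V R) :
      (Matrix.transvection (G.src e0) (G.tgt e0) (G.conn e0 : R) * N *
        Matrix.transvection (G.tgt e0) (G.src e0) (((G.conn e0)⁻¹ : Rˣ) : R)).det = N.det := by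
    rw [Matrix.det_mul, Matrix.det_mul, Matrix.det_transvection_of_ne _ _ h,
      Matrix.det_transvection_of_ne _ _ h.symm, one_mul, mul_one]
  unfold CGraph.lapDet
  rw [G.lap_contract, ← hdet G.lap, G.lap_eq_deletedLap_add e0]
  refine (congrArg Matrix.det ?_).trans ((Matrix.det_add_single_self _ (G.tgt e0)
    (G.sign e0)).trans (congrArg (· + _) (hdet (G.deletedLap e0))))
  rw [Matrix.mul_add, Matrix.add_mul, Matrix.mul_smul, Matrix.smul_mul,
    CGraph.transvection_mul_edgeLap_mul_transvection h, Matrix.smul_single, smul_eq_mul, mul_one]
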